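/- For the planar rancher process (x_n), for every n, almost surely E[‖x_{n+1}‖ − ‖x_n‖ | F_n] ≥ 0. -/

import Mathlib

open MeasureTheory Filter Real

/-- The unit vector in the plane at angle `θ`. -/
noncomputable def unitDir (θ : ℝ) : EuclideanSpace ℝ (Fin 2) :=
  (WithLp.equiv 2 (Fin 2 → ℝ)).symm ![Real.cos θ, Real.sin θ]

/-- The set of angles `θ ∈ [0, 2π)` such that the unit step from `xₙ` in
direction `θ` does not intersect the interior of the convex hull of
`{x₀, …, xₙ}` (the ranch).  The points `y` at distance `1` from `xₙ` are
exactly the points `xₙ + unitDir θ`, `θ ∈ [0, 2π)`. -/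
noncomputable def rancherAngles {Ω : Type*} (x : ℕ → Ω → EuclideanSpace ℝ (Fin 2))
    (n : ℕ) (ω : Ω) : Set ℝ :=
  {θ : ℝ | θ ∈ Set.Ico 0 (2 * π) ∧
    segment ℝ (x n ω) (x n ω + unitDir θ) ∩
      interior (convexHull ℝ (Set.range fun i : Fin (n + 1) => x i ω)) = ∅}

/-- The normalized arc-length (uniform) measure on the set of allowed
positions for `x_{n+1}`:  the push-forward under `θ ↦ xₙ + unitDir θ` of the
normalized restriction of Lebesgue measure to the allowed angles. -/
noncomputable def rancherStep {Ω : Type*} (x : ℕ → Ω → EuclideanSpace ℝ (Fin 2))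
    (n : ℕ) (ω : Ω) : Measure (EuclideanSpace ℝ (Fin 2)) :=
  (volume (rancherAngles x n ω))⁻¹ •
    (volume.restrict (rancherAngles x n ω)).map fun θ => x n ω + unitDir θ

@[simp] lemma unitDir_apply_zero (θ : ℝ) : unitDir θ 0 = Real.cos θ := rfl

@[simp] lemma unitDir_apply_one (θ : ℝ) : unitDir θ 1 = Real.sin θ := rfl

lemma continuous_unitDir : Continuous unitDir := by
  unfold unitDir
  refine (PiLp.continuous_toLp 2 (fun _ : Fin 2 => ℝ)).comp (continuous_pi fun i => ?_)
  fin_cases i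
  · exact Real.continuous_cos
  · exact Real.continuous_sin

@[simp] lemma norm_unitDir (θ : ℝ) : ‖unitDir θ‖ = 1 := by
  simp [EuclideanSpace.norm_eq, Fin.sum_univ_two]

lemma inner_unitDir (θ φ : ℝ) : inner ℝ (unitDir θ) (unitDir φ) = Real.cos (θ - φ) := by
  simp [PiLp.inner_apply, Fin.sum_univ_two, Real.cos_sub]
  ring

lemma unitDir_periodic : Function.Periodic unitDir (2 * π) := by
  intro θ
  simp [unitDir]

/-- The angle `π + 2 * φ - θ` is the mirror image of `θ` in the line orthogonal to direction `φ`. -/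
lemma unitDir_reflect (θ φ : ℝ) :
    unitDir (π + 2 * φ - θ) = unitDir θ - (2 * Real.cos (θ - φ)) • unitDir φ := by
  have h : π + 2 * φ - θ = π - (θ - φ - φ) := by ring
  have h' : θ = θ - φ + φ := by ring
  ext i
  fin_cases i
  · simp only [Fin.zero_eta, PiLp.sub_apply, PiLp.smul_apply, unitDir_apply_zero, smul_eq_mul]
    rw [h, Real.cos_pi_sub, Real.cos_sub (θ - φ) φ]
    nth_rewrite 3 [h']
    rw [Real.cos_add]
    ring
  · simp only [Fin.mk_one, PiLp.sub_apply, PiLp.smul_apply, unitDir_apply_one, smul_eq_mul]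
    rw [h, Real.sin_pi_sub, Real.sin_sub (θ - φ) φ]
    nth_rewrite 3 [h']
    rw [Real.sin_add]
    ring

lemma exists_eq_norm_smul_unitDir (p : EuclideanSpace ℝ (Fin 2)) :
    ∃ φ : ℝ, p = ‖p‖ • unitDir φ := by
  set z : ℂ := ⟨p 0, p 1⟩ with hz
  have hn : ‖z‖ = ‖p‖ := by
    rw [EuclideanSpace.norm_eq, Fin.sum_univ_two, Complex.norm_def, Complex.normSq_apply]
    simp [hz, sq]
  refine ⟨Complex.arg z, ?_⟩
  ext i
  fin_cases i
  · simp [← hn, hz, Complex.norm_mul_cos_arg]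
  · simp [← hn, hz, Complex.norm_mul_sin_arg]

lemma norm_add_cos_le (r θ φ : ℝ) :
    r + Real.cos (θ - φ) ≤ ‖r • unitDir φ + unitDir θ‖ := by
  have h := real_inner_le_norm (r • unitDir φ + unitDir θ) (unitDir φ)
  rw [inner_add_left, real_inner_smul_left, inner_unitDir, inner_unitDir, norm_unitDir] at h
  simpa using h

/-- The angles `θ` such that the unit step from `p` in direction `θ` avoids the interior of `K`. -/
def legalAngles (K : Set (EuclideanSpace ℝ (Fin 2))) (p : EuclideanSpace ℝ (Fin 2)) : Set ℝ :=
  {θ | segment ℝ p (p + unitDir θ) ∩ interior K = ∅}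

section LegalAngles

variable {K : Set (EuclideanSpace ℝ (Fin 2))} {p : EuclideanSpace ℝ (Fin 2)}

lemma mem_legalAngles_iff {θ : ℝ} :
    θ ∈ legalAngles K p ↔ ∀ s ∈ Set.Icc (0 : ℝ) 1, p + s • unitDir θ ∉ interior K := by
  simp only [legalAngles, Set.mem_ofPred_eq, segment_eq_image', ← Set.disjoint_iff_inter_eq_empty,
    Set.disjoint_left, Set.forall_mem_image, add_sub_cancel_left]

lemma isClosed_legalAngles : IsClosed (legalAngles K p) := by
  have h : legalAngles K p =
      ⋂ s ∈ Set.Icc (0 : ℝ) 1, (fun θ => p + s • unitDir θ) ⁻¹' (interior K)ᶜ := by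
    ext θ
    simp only [mem_legalAngles_iff, Set.mem_iInter, Set.mem_preimage, Set.mem_compl_iff]
  rw [h]
  refine isClosed_biInter fun s _ => isOpen_interior.isClosed_compl.preimage ?_
  exact continuous_const.add (continuous_unitDir.const_smul s)

lemma add_two_pi_mem_legalAngles_iff {θ : ℝ} :
    θ + 2 * π ∈ legalAngles K p ↔ θ ∈ legalAngles K p := by
  simp only [mem_legalAngles_iff, unitDir_periodic θ]

/-- Mirroring a legal direction that decreases the radius gives a legal direction. -/
lemma reflect_mem_legalAngles (hK : Convex ℝ K) (h0 : (0 : EuclideanSpace ℝ (Fin 2)) ∈ K)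
    {r φ θ : ℝ} (hr : 0 < r) (hcos : Real.cos (θ - φ) ≤ 0)
    (hθ : θ ∈ legalAngles K (r • unitDir φ)) :
    π + 2 * φ - θ ∈ legalAngles K (r • unitDir φ) := by
  rw [mem_legalAngles_iff] at hθ ⊢
  intro s hs hmem
  set c : ℝ := -(2 * Real.cos (θ - φ)) / r with hc
  have hc0 : 0 ≤ c := div_nonneg (by linarith) hr.le
  have hd : 0 < 1 + s * c := by have := mul_nonneg hs.1 hc0; linarith
  have hcomb := hK.combo_interior_self_mem_interior hmem h0 (a := (1 + s * c)⁻¹)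
    (b := 1 - (1 + s * c)⁻¹) (inv_pos.2 hd)
    (sub_nonneg.2 (inv_le_one_of_one_le₀ (by have := mul_nonneg hs.1 hc0; linarith))) (by ring)
  refine hθ (s / (1 + s * c)) ⟨div_nonneg hs.1 hd.le, ?_⟩ ?_
  · rw [div_le_one hd]
    have := mul_nonneg hs.1 hc0
    linarith [hs.2]
  · convert hcomb using 1
    have hrc : r * c = -(2 * Real.cos (θ - φ)) := by rw [hc]; field_simp
    have hcos' : 2 * Real.cos (θ - φ) = -(r * c) := by linarith
    rw [unitDir_reflect, hcos', smul_zero, add_zero]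
    have hscale : r • unitDir φ + s • (unitDir θ - (-(r * c)) • unitDir φ) =
        (1 + s * c) • (r • unitDir φ) + s • unitDir θ := by
      module
    rw [hscale, smul_add, smul_smul, inv_mul_cancel₀ hd.ne', one_smul, smul_smul]
    congr 2
    field_simp

lemma integral_cos_legalAngles_nonneg (hK : Convex ℝ K)
    (h0 : (0 : EuclideanSpace ℝ (Fin 2)) ∈ K) {r φ : ℝ} (hr : 0 < r) :
    0 ≤ ∫ θ in Set.Ico 0 (2 * π) ∩ legalAngles K (r • unitDir φ), Real.cos (θ - φ) := by
  set L := legalAngles K (r • unitDir φ)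
  have hLm : MeasurableSet L := isClosed_legalAngles.measurableSet
  set h : ℝ → ℝ := L.indicator fun θ => Real.cos (θ - φ) with hh
  have hper : Function.Periodic h (2 * π) := by
    intro θ
    have hc : Real.cos (θ + 2 * π - φ) = Real.cos (θ - φ) := by
      rw [add_sub_right_comm, Real.cos_add_two_pi]
    by_cases hθ : θ ∈ L
    · rw [hh, Set.indicator_of_mem hθ, Set.indicator_of_mem (add_two_pi_mem_legalAngles_iff.2 hθ),
        hc]
    · rw [hh, Set.indicator_of_notMem hθ,
        Set.indicator_of_notMem fun h' => hθ (add_two_pi_mem_legalAngles_iff.1 h')]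
  have hcont : Continuous fun θ : ℝ => Real.cos (θ - φ) := by fun_prop
  have hint : ∀ a b : ℝ, IntervalIntegrable h volume a b := fun a b =>
    ⟨(hcont.intervalIntegrable a b).1.indicator hLm, (hcont.intervalIntegrable a b).2.indicator hLm⟩
  have hset : ∫ θ in Set.Ico 0 (2 * π) ∩ L, Real.cos (θ - φ) = ∫ θ in (0 : ℝ)..2 * π, h θ := by
    rw [intervalIntegral.integral_of_le Real.two_pi_pos.le, ← integral_Ico_eq_integral_Ioc,
      hh, setIntegral_indicator hLm]
  have hrefl : ∫ θ in (0 : ℝ)..2 * π, h (π + 2 * φ - θ) = ∫ θ in (0 : ℝ)..2 * π, h θ := by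
    rw [intervalIntegral.integral_comp_sub_left]
    have := hper.intervalIntegral_add_eq (π + 2 * φ - 2 * π) 0
    rw [zero_add, sub_add_cancel] at this
    rw [this.symm, sub_zero]
  have hmem : ∀ θ, Real.cos (θ - φ) ≤ 0 → θ ∈ L → π + 2 * φ - θ ∈ L := fun θ hc hθ =>
    reflect_mem_legalAngles hK h0 hr hc hθ
  have hcosrefl : ∀ θ, Real.cos (π + 2 * φ - θ - φ) = -Real.cos (θ - φ) := fun θ => by
    rw [show π + 2 * φ - θ - φ = π - (θ - φ) by ring, Real.cos_pi_sub]
  have hpos : ∀ θ, 0 ≤ h θ + h (π + 2 * φ - θ) := by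
    intro θ
    have hback : π + 2 * φ - (π + 2 * φ - θ) = θ := by ring
    have h1 := hmem θ
    have h2 := hmem (π + 2 * φ - θ)
    rw [hcosrefl, hback] at h2
    by_cases ha : θ ∈ L <;> by_cases hb : π + 2 * φ - θ ∈ L
    · simp [hh, ha, hb, hcosrefl]
    · have : 0 < Real.cos (θ - φ) := not_le.1 fun hc => hb (h1 hc ha)
      simpa [hh, ha, hb] using this.le
    · have : -Real.cos (θ - φ) > 0 := not_le.1 fun hc => ha (h2 hc hb)
      simpa [hh, ha, hb, hcosrefl] using this.le
    · simp [hh, ha, hb]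
  have hsum : 0 ≤ ∫ θ in (0 : ℝ)..2 * π, (h θ + h (π + 2 * φ - θ)) :=
    intervalIntegral.integral_nonneg Real.two_pi_pos.le fun θ _ => hpos θ
  rw [intervalIntegral.integral_add (hint _ _) ?_, hrefl] at hsum
  · rw [hset]
    linarith
  · have := (hint (π + 2 * φ - 0) (π + 2 * φ - 2 * π)).comp_sub_left (π + 2 * φ)
    simpa using this

lemma norm_mul_volume_le_setIntegral (hK : Convex ℝ K)
    (h0 : (0 : EuclideanSpace ℝ (Fin 2)) ∈ K) {M : ℝ} (hM : ‖p‖ + 1 ≤ M) :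
    ‖p‖ * volume.real (Set.Ico 0 (2 * π) ∩ legalAngles K p) ≤
      ∫ θ in Set.Ico 0 (2 * π) ∩ legalAngles K p, min ‖p + unitDir θ‖ M := by
  have hM0 : 0 ≤ M := le_trans (by positivity) hM
  have hfin : volume (Set.Ico 0 (2 * π) ∩ legalAngles K p) ≠ ⊤ :=
    measure_ne_top_of_subset Set.inter_subset_left measure_Ico_lt_top.ne
  rcases eq_or_ne p 0 with hp | hp
  · rw [hp, norm_zero, zero_mul]
    exact integral_nonneg fun θ => le_min (norm_nonneg _) hM0
  obtain ⟨φ, hφ⟩ := exists_eq_norm_smul_unitDir p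
  have hr : 0 < ‖p‖ := norm_pos_iff.2 hp
  have hcos := integral_cos_legalAngles_nonneg (φ := φ) hK h0 hr
  rw [← hφ] at hcos
  have hi : ∀ f : ℝ → ℝ, Continuous f →
      IntegrableOn f (Set.Ico 0 (2 * π) ∩ legalAngles K p) := fun f hf =>
    (hf.integrableOn_Icc (a := 0) (b := 2 * π)).mono_set
      (Set.inter_subset_left.trans Set.Ico_subset_Icc_self)
  calc ‖p‖ * volume.real (Set.Ico 0 (2 * π) ∩ legalAngles K p)
      ≤ (∫ _ in Set.Ico 0 (2 * π) ∩ legalAngles K p, ‖p‖) +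
          ∫ θ in Set.Ico 0 (2 * π) ∩ legalAngles K p, Real.cos (θ - φ) := by
        rw [setIntegral_const, smul_eq_mul, mul_comm]
        linarith
    _ = ∫ θ in Set.Ico 0 (2 * π) ∩ legalAngles K p, (‖p‖ + Real.cos (θ - φ)) :=
        (integral_add (hi _ continuous_const) (hi _ (by fun_prop))).symm
    _ ≤ _ := by
        refine integral_mono (hi _ (by fun_prop))
          (hi _ ((continuous_const.add continuous_unitDir).norm.min continuous_const)) fun θ => ?_
        refine le_min ?_ ?_
        · have := norm_add_cos_le ‖p‖ θ φ
          rwa [← hφ] at this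
        · have := Real.cos_le_one (θ - φ)
          dsimp only
          linarith

end LegalAngles

section Step

variable {Ω : Type*} {x : ℕ → Ω → EuclideanSpace ℝ (Fin 2)} {n : ℕ} {ω : Ω}

lemma rancherAngles_eq : rancherAngles x n ω = Set.Ico 0 (2 * π) ∩
    legalAngles (convexHull ℝ (Set.range fun i : Fin (n + 1) => x i ω)) (x n ω) := rfl

lemma integral_rancherStep {g : EuclideanSpace ℝ (Fin 2) → ℝ} (hg : Measurable g) :
    ∫ y, g y ∂(rancherStep x n ω) = (volume.real (rancherAngles x n ω))⁻¹ *
      ∫ θ in rancherAngles x n ω, g (x n ω + unitDir θ) := by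
  have hu : Measurable fun θ => x n ω + unitDir θ :=
    (continuous_const.add continuous_unitDir).measurable
  rw [rancherStep, integral_smul_measure,
    integral_map hu.aemeasurable hg.aestronglyMeasurable,
    ENNReal.toReal_inv, smul_eq_mul, Measure.real]

/-- A truncated form of the radial gain, under one step of the rancher process. -/
lemma norm_le_integral_rancherStep (h0 : x 0 ω = 0)
    (hstep : ∫ _, (1 : ℝ) ∂(rancherStep x n ω) = 1) {M : ℝ} (hM : ‖x n ω‖ + 1 ≤ M) :
    ‖x n ω‖ ≤ ∫ y, min ‖y‖ M ∂(rancherStep x n ω) := by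
  rw [integral_rancherStep measurable_const, setIntegral_const, smul_eq_mul, mul_one] at hstep
  have hV : 0 < volume.real (rancherAngles x n ω) :=
    measureReal_nonneg.lt_of_ne' fun h => by simp [h] at hstep
  rw [integral_rancherStep (by fun_prop), ← div_eq_inv_mul, le_div_iff₀ hV, rancherAngles_eq]
  exact norm_mul_volume_le_setIntegral (convex_convexHull ℝ _)
    (subset_convexHull ℝ _ (Set.mem_range.2 ⟨0, by simpa using h0⟩)) hM

end Step

/-- For the planar rancher process, for every `n`, almost surely
`E[‖x_{n+1}‖ - ‖xₙ‖ | ℱ n] ≥ 0`.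

The rancher process is described by: a filtration `ℱ` with `ℱ n` generated by
`x₀, …, xₙ`; the starting point `x₀ = 0`; and the requirement that the
conditional law of `x_{n+1}` given `ℱ n` is the uniform measure on the allowed
arcs, expressed by the condition that for every bounded measurable test
function `g`, the conditional expectation of `g (x_{n+1})` given `ℱ n` is
a.s. the integral of `g` against `rancherStep x n ω`. -/
theorem rancher_expected_radial_gain_nonneg {Ω : Type*} {m0 : MeasurableSpace Ω}
    {μ : Measure Ω} [IsProbabilityMeasure μ] (ℱ : Filtration ℕ m0)
    (x : ℕ → Ω → EuclideanSpace ℝ (Fin 2))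
    (hx : ∀ n, Measurable (x n))
    (hfilt : ∀ n, (ℱ n : MeasurableSpace Ω) =
      ⨆ i : Fin (n + 1), MeasurableSpace.comap (x i)
        (inferInstance : MeasurableSpace (EuclideanSpace ℝ (Fin 2))))
    (hx0 : ∀ ω, x 0 ω = 0)
    (hcond : ∀ (n : ℕ) (g : EuclideanSpace ℝ (Fin 2) → ℝ), Measurable g →
      (∀ y, |g y| ≤ 1) →
      (μ[fun ω => g (x (n + 1) ω) | ℱ n] =ᵐ[μ]
        fun ω => ∫ y, g y ∂(rancherStep x n ω))) :
    ∀ n : ℕ, ∀ᵐ ω ∂μ,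
      0 ≤ (μ[fun ω => ‖x (n + 1) ω‖ - ‖x n ω‖ | ℱ n]) ω := by
  intro n
  by_cases hD : Integrable (fun ω => ‖x (n + 1) ω‖ - ‖x n ω‖) μ
  swap
  · rw [condExp_of_not_integrable hD]
    simp
  have hxn : Measurable[ℱ n] (x n) := by
    rw [hfilt n]
    exact Measurable.of_comap_le
      (le_iSup (fun i : Fin (n + 1) => MeasurableSpace.comap (x i)
        (inferInstance : MeasurableSpace (EuclideanSpace ℝ (Fin 2)))) (Fin.last n))
  have hnorm : Measurable[ℱ n] fun ω => ‖x n ω‖ := measurable_norm.comp hxn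
  have hone : ∀ᵐ ω ∂μ, ∫ _, (1 : ℝ) ∂(rancherStep x n ω) = 1 := by
    have h := hcond n (fun _ => 1) measurable_const (by simp)
    rw [condExp_const (ℱ.le n)] at h
    filter_upwards [h] with ω hω using hω.symm
  have key : ∀ k : ℕ, ∀ᵐ ω ∂μ, ‖x n ω‖ ≤ k →
      0 ≤ (μ[fun ω => ‖x (n + 1) ω‖ - ‖x n ω‖ | ℱ n]) ω := by
    intro k
    set M : ℝ := k + 1 with hM
    have hM0 : 0 < M := by positivity
    set B : Set Ω := {ω | ‖x n ω‖ ≤ k} with hB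
    have hBm : MeasurableSet[ℱ n] B :=
      hnorm measurableSet_Iic
    set T : Ω → ℝ := fun ω => min ‖x (n + 1) ω‖ M with hT
    have hTm : Measurable T := (hx (n + 1)).norm.min measurable_const
    have hTi : Integrable T μ := by
      refine Integrable.of_bound hTm.aestronglyMeasurable M (ae_of_all _ fun ω => ?_)
      rw [Real.norm_of_nonneg (le_min (norm_nonneg _) hM0.le)]
      exact min_le_right _ _
    set N : Ω → ℝ := B.indicator fun ω => ‖x n ω‖ with hN
    have hNm : StronglyMeasurable[ℱ n] N :=
      hnorm.stronglyMeasurable.indicator hBm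
    have hNi : Integrable N μ := by
      refine Integrable.of_bound (hNm.mono (ℱ.le n)).aestronglyMeasurable k
        (ae_of_all _ fun ω => ?_)
      by_cases hω : ω ∈ B
      · rw [hN, Set.indicator_of_mem hω, norm_norm]
        exact hω
      · simp [hN, Set.indicator_of_notMem hω]
    have hTcond : μ[T | ℱ n] =ᵐ[μ] fun ω => ∫ y, min ‖y‖ M ∂(rancherStep x n ω) := by
      have h := hcond n (fun y => M⁻¹ * min ‖y‖ M) (by fun_prop) fun y => by
        rw [abs_of_nonneg (mul_nonneg (inv_nonneg.2 hM0.le) (le_min (norm_nonneg _) hM0.le)),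
          ← div_eq_inv_mul, div_le_one hM0]
        exact min_le_right _ _
      have h' : μ[fun ω => M⁻¹ * min ‖x (n + 1) ω‖ M | ℱ n] =ᵐ[μ] M⁻¹ • μ[T | ℱ n] :=
        condExp_smul M⁻¹ T (ℱ n)
      filter_upwards [h, h'] with ω hω hω'
      rw [hω', Pi.smul_apply, smul_eq_mul, integral_const_mul] at hω
      exact mul_left_cancel₀ (inv_ne_zero hM0.ne') hω
    have hmono : μ[B.indicator T - N | ℱ n] ≤ᵐ[μ]
        μ[B.indicator (fun ω => ‖x (n + 1) ω‖ - ‖x n ω‖) | ℱ n] := by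
      refine condExp_mono ((hTi.indicator (ℱ.le n _ hBm)).sub hNi)
        (hD.indicator (ℱ.le n _ hBm)) (ae_of_all _ fun ω => ?_)
      by_cases hω : ω ∈ B
      · simp [hN, hT, hω]
      · simp [hN, hω]
    filter_upwards [hone, hTcond, hmono, condExp_indicator hD hBm, condExp_indicator hTi hBm,
      condExp_sub (hTi.indicator (ℱ.le n _ hBm)) hNi (ℱ n)] with ω h1 h2 h3 h4 h5 h6 hω
    have hωB : ω ∈ B := hω
    rw [h4, h6, Pi.sub_apply, h5, condExp_of_stronglyMeasurable (ℱ.le n) hNm hNi,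
      Set.indicator_of_mem hωB, Set.indicator_of_mem hωB, h2, hN, Set.indicator_of_mem hωB] at h3
    have := norm_le_integral_rancherStep (hx0 ω) h1 (M := M) (by rw [hM]; linarith)
    linarith
  filter_upwards [ae_all_iff.2 key] with ω hω
  obtain ⟨k, hk⟩ := exists_nat_ge ‖x n ω‖
  exact hω k hk
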